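/- Let Γ be a planar lattice whose Gram matrix with respect to some (equivalently, any) ℤ-basis has integer entries whose greatest common divisor is 1 (an integral, primitive lattice), and let d = disc(Γ) be the determinant of this Gram matrix. Let Γ* = {u ∈ ℝ² : ⟨u, v⟩ ∈ ℤ for all v ∈ Γ} ∩ ℚΓ be the dual lattice, and for a primitive vector w ∈ Γ let g*(w) denote its coefficient with respect to Γ*, i.e., the unique positive rational g such that w = g·u₀ with u₀ primitive in Γ*. Let Γ_w = ℤw + (w^⊥ ∩ Γ) be the basic rectangular sublattice determined by w. Then g*(w) is a positive integer dividing d, and [Γ : Γ_w] = ⟨w, w⟩ / g*(w). -/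

import Mathlib

noncomputable section

open scoped RealInnerProductSpace

/-- The Euclidean plane. -/
abbrev EucPlane : Type := EuclideanSpace ℝ (Fin 2)

/-- A vector `w` is primitive in `Λ` if `w ∈ Λ` and it is not a proper integral
multiple of a lattice vector. -/
def IsPrimitiveIn (Λ : AddSubgroup EucPlane) (w : EucPlane) : Prop :=
  w ∈ Λ ∧ ∀ (m : ℤ) (u : EucPlane), u ∈ Λ → w = m • u → m = 1 ∨ m = -1

/-- The additive subgroup of vectors orthogonal to `w`. -/
def perpSubgroup (w : EucPlane) : AddSubgroup EucPlane where
  carrier := {z : EucPlane | ⟪w, z⟫ = 0}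
  zero_mem' := by simp
  add_mem' := by
    intro a b ha hb
    simp only [Set.mem_setOf_eq] at *
    rw [inner_add_right, ha, hb, add_zero]
  neg_mem' := by
    intro a ha
    simp only [Set.mem_setOf_eq] at *
    rw [inner_neg_right, ha, neg_zero]

/-- The dual lattice of `Γ`: all vectors having integral inner product with every
vector of `Γ` (for an integral planar lattice this coincides with `Γ* ∩ ℚΓ`). -/
def dualLattice (Γ : AddSubgroup EucPlane) : AddSubgroup EucPlane where
  carrier := {u : EucPlane | ∀ v ∈ Γ, ∃ k : ℤ, ⟪u, v⟫ = (k : ℝ)}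
  zero_mem' := by
    intro v _
    exact ⟨0, by simp⟩
  add_mem' := by
    intro a b ha hb v hv
    obtain ⟨k, hk⟩ := ha v hv
    obtain ⟨m, hm⟩ := hb v hv
    exact ⟨k + m, by rw [inner_add_left, hk, hm]; push_cast; ring⟩
  neg_mem' := by
    intro a ha v hv
    obtain ⟨k, hk⟩ := ha v hv
    exact ⟨-k, by rw [inner_neg_left, hk]; push_cast; ring⟩

/-- The basic rectangular sublattice `Γ_w = ℤw + (w^⊥ ∩ Γ)` determined by a
primitive vector `w` of `Γ`. -/
def brsSublattice (Γ : AddSubgroup EucPlane) (w : EucPlane) : AddSubgroup EucPlane :=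
  AddSubgroup.closure {w} ⊔ (Γ ⊓ perpSubgroup w)

/-!
Since `u₀` is primitive in the dual lattice, `⟪u₀, ·⟫ : Γ → ℤ` is onto: a common divisor of its
values could be divided out of `u₀`. As `w = g • u₀`, its kernel is `w^⊥ ∩ Γ`, so `Γ_w` is the
preimage of `⟪u₀, w⟫ ℤ` and has index `⟪u₀, w⟫ = ⟪w, w⟫ / g`. Pairing `w` with some `z ∈ Γ` such
that `⟪u₀, z⟫ = 1` shows `g = ⟪w, z⟫ ∈ ℤ`. Finally, with `d` the Gram determinant, `d • u₀ ∈ Γ` by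
Cramer's rule, and `d • w = g • (d • u₀)` forces `g ∣ d` because `w` is primitive in `Γ`.
-/

section

variable {Γ : AddSubgroup EucPlane}

lemma IsPrimitiveIn.dvd_of_zsmul_eq_zsmul {v w : EucPlane} (hw : IsPrimitiveIn Γ w) (hv : v ∈ Γ)
    {m n : ℤ} (h : m • w = n • v) : n ∣ m := by
  obtain hd | hd := eq_or_ne (Int.gcd m n : ℤ) 0
  · exact (Int.gcd_eq_zero_iff.1 (Int.natCast_eq_zero.1 hd)).1 ▸ dvd_zero n
  obtain ⟨k, hk⟩ := Int.gcd_dvd_right m n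
  set x := Int.gcdA m n
  set y := Int.gcdB m n
  have bezout : (Int.gcd m n : ℤ) = m * x + n * y := Int.gcd_eq_gcd_ab m n
  have hw_eq : w = k • (x • v + y • w) := by
    have : IsAddTorsionFree EucPlane := .of_isTorsionFree ℝ EucPlane
    refine zsmul_right_injective hd ?_
    calc (Int.gcd m n : ℤ) • w = x • m • w + (n * y) • w := by rw [bezout]; module
      _ = n • (x • v + y • w) := by rw [h]; module
      _ = (Int.gcd m n : ℤ) • k • (x • v + y • w) := by rw [smul_smul, ← hk]
  have hk_unit : IsUnit k := Int.isUnit_iff.2 <|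
    hw.2 k _ (add_mem (Γ.zsmul_mem hv x) (Γ.zsmul_mem hw.1 y)) hw_eq
  have hn : n ∣ Int.gcd m n := hk_unit.dvd_mul_right.1 hk.dvd
  exact hn.trans (Int.gcd_dvd_left m n)

lemma mem_dualLattice_closure {S : Set EucPlane} {u : EucPlane} :
    u ∈ dualLattice (AddSubgroup.closure S) ↔ ∀ v ∈ S, ∃ k : ℤ, ⟪u, v⟫ = (k : ℝ) := by
  refine ⟨fun hu v hv ↦ hu v (AddSubgroup.subset_closure hv), fun hu v hv ↦ ?_⟩
  induction hv using AddSubgroup.closure_induction with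
  | mem v hv => exact hu v hv
  | zero => exact ⟨0, by simp⟩
  | add v v' _ _ hv hv' =>
    obtain ⟨k, hk⟩ := hv
    obtain ⟨k', hk'⟩ := hv'
    exact ⟨k + k', by rw [inner_add_right, hk, hk', Int.cast_add]⟩
  | neg v _ hv =>
    obtain ⟨k, hk⟩ := hv
    exact ⟨-k, by rw [inner_neg_right, hk, Int.cast_neg]⟩

lemma closure_le_dualLattice_closure {S : Set EucPlane}
    (hS : ∀ u ∈ S, ∀ v ∈ S, ∃ k : ℤ, ⟪u, v⟫ = (k : ℝ)) :
    AddSubgroup.closure S ≤ dualLattice (AddSubgroup.closure S) :=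
  (AddSubgroup.closure_le _).2 fun u hu ↦ mem_dualLattice_closure.2 (hS u hu)

lemma gram_det_zsmul_mem_closure_pair {u v₁ v₂ : EucPlane} {a b c : ℤ}
    (ha : ⟪v₁, v₁⟫ = (a : ℝ)) (hb : ⟪v₁, v₂⟫ = (b : ℝ)) (hc : ⟪v₂, v₂⟫ = (c : ℝ))
    (hu : u ∈ dualLattice (AddSubgroup.closure {v₁, v₂}))
    (hspan : u ∈ Submodule.span ℝ {v₁, v₂}) :
    (a * c - b ^ 2) • u ∈ AddSubgroup.closure {v₁, v₂} := by
  obtain ⟨x, y, rfl⟩ := Submodule.mem_span_pair.1 hspan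
  obtain ⟨k₁, hk₁⟩ := mem_dualLattice_closure.1 hu v₁ (by simp)
  obtain ⟨k₂, hk₂⟩ := mem_dualLattice_closure.1 hu v₂ (by simp)
  rw [inner_add_left, real_inner_smul_left, real_inner_smul_left] at hk₁ hk₂
  rw [ha, real_inner_comm, hb] at hk₁
  rw [hb, hc] at hk₂
  refine AddSubgroup.mem_closure_pair.2 ⟨k₁ * c - k₂ * b, a * k₂ - b * k₁, ?_⟩
  simp only [← Int.cast_smul_eq_zsmul ℝ]
  push_cast
  rw [← hk₁, ← hk₂]
  module

/-- The homomorphism `⟪u, ·⟫ : Γ → ℤ` attached to a vector `u` of the dual lattice; its integer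
values are chosen from the existential in `dualLattice` and characterised by `dualPairing_apply`. -/
def dualPairing (u : dualLattice Γ) : Γ →+ ℤ :=
  AddMonoidHom.mk' (fun z ↦ (u.2 z z.2).choose) fun z z' ↦ by
    rify
    rw [← (u.2 _ (z + z').2).choose_spec, ← (u.2 _ z.2).choose_spec,
      ← (u.2 _ z'.2).choose_spec, ← inner_add_right, AddSubgroup.coe_add]

lemma dualPairing_apply (u : dualLattice Γ) (z : Γ) :
    (dualPairing u z : ℝ) = ⟪(u : EucPlane), (z : EucPlane)⟫ :=
  (u.2 z z.2).choose_spec.symm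

lemma IsPrimitiveIn.isUnit_of_dvd_dualPairing {u : EucPlane}
    (hu : IsPrimitiveIn (dualLattice Γ) u) {n : ℤ} (hn : n ≠ 0)
    (hdvd : ∀ z, n ∣ dualPairing ⟨u, hu.1⟩ z) : IsUnit n := by
  have hnR : (n : ℝ) ≠ 0 := Int.cast_ne_zero.2 hn
  have hmem : (n : ℝ)⁻¹ • u ∈ dualLattice Γ := fun v hv ↦ by
    obtain ⟨k, hk⟩ := hdvd ⟨v, hv⟩
    refine ⟨k, ?_⟩
    rw [real_inner_smul_left, ← dualPairing_apply ⟨u, hu.1⟩ ⟨v, hv⟩, hk, Int.cast_mul,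
      inv_mul_cancel_left₀ hnR]
  refine Int.isUnit_iff.2 (hu.2 n _ hmem ?_)
  rw [← Int.cast_smul_eq_zsmul ℝ, smul_inv_smul₀ hnR]

lemma IsPrimitiveIn.dualPairing_surjective {u : EucPlane}
    (hu : IsPrimitiveIn (dualLattice Γ) u) :
    Function.Surjective (dualPairing ⟨u, hu.1⟩) := by
  set φ := dualPairing ⟨u, hu.1⟩
  obtain ⟨n, hn⟩ := Int.subgroup_cyclic φ.range
  rw [← AddSubgroup.zmultiples_eq_closure] at hn
  have hdvd (z : Γ) : n ∣ φ z := Int.mem_zmultiples_iff.1 (hn ▸ ⟨z, rfl⟩)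
  have hn0 : n ≠ 0 := by
    rintro rfl
    have h2 : IsUnit (2 : ℤ) :=
      hu.isUnit_of_dvd_dualPairing two_ne_zero fun z ↦ (dvd_zero 2).trans (hdvd z)
    exact absurd h2 (by decide)
  have hunit : IsUnit n := hu.isUnit_of_dvd_dualPairing hn0 hdvd
  refine AddMonoidHom.range_eq_top.1 (hn.trans ?_)
  exact (AddSubgroup.eq_top_iff' _).2 fun k ↦ Int.mem_zmultiples_iff.2 hunit.dvd

lemma IsPrimitiveIn.exists_intCast_eq_of_smul_mem {u : EucPlane}
    (hu : IsPrimitiveIn (dualLattice Γ) u) {g : ℝ} (hgu : g • u ∈ dualLattice Γ) :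
    ∃ n : ℤ, (n : ℝ) = g := by
  obtain ⟨z, hz⟩ := hu.dualPairing_surjective 1
  obtain ⟨n, hn⟩ := hgu z z.2
  refine ⟨n, ?_⟩
  rw [← hn, real_inner_smul_left, ← dualPairing_apply ⟨u, hu.1⟩ z, hz, Int.cast_one, mul_one]

lemma perpSubgroup_smul_addSubgroupOf_eq_ker (u : dualLattice Γ) {g : ℝ} (hg : g ≠ 0) :
    (perpSubgroup (g • (u : EucPlane))).addSubgroupOf Γ = (dualPairing u).ker := by
  ext z
  change ⟪g • (u : EucPlane), (z : EucPlane)⟫ = 0 ↔ dualPairing u z = 0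
  rw [real_inner_smul_left, ← dualPairing_apply, mul_eq_zero_iff_left hg, Int.cast_eq_zero]

lemma brsSublattice_addSubgroupOf_eq_comap (u : dualLattice Γ) {g : ℝ} (hg : g ≠ 0) (w : Γ)
    (hwu : (w : EucPlane) = g • (u : EucPlane)) :
    (brsSublattice Γ w).addSubgroupOf Γ =
      (AddSubgroup.zmultiples (dualPairing u w)).comap (dualPairing u) := by
  have hmap : AddSubgroup.closure {(w : EucPlane)} = (AddSubgroup.zmultiples w).map Γ.subtype := by
    rw [AddMonoidHom.map_zmultiples, AddSubgroup.zmultiples_eq_closure, AddSubgroup.subtype_apply]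
  have hline : (AddSubgroup.closure {(w : EucPlane)}).addSubgroupOf Γ = AddSubgroup.zmultiples w :=
    hmap ▸ AddSubgroup.comap_map_eq_self_of_injective Γ.subtype_injective _
  have hperp : (perpSubgroup w).addSubgroupOf Γ = (dualPairing u).ker :=
    hwu ▸ perpSubgroup_smul_addSubgroupOf_eq_ker u hg
  calc (brsSublattice Γ w).addSubgroupOf Γ
      = (AddSubgroup.closure {(w : EucPlane)}).addSubgroupOf Γ
          ⊔ (Γ ⊓ perpSubgroup w).addSubgroupOf Γ :=
        AddSubgroup.addSubgroupOf_sup ((AddSubgroup.closure_le _).2 (by simp)) inf_le_left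
    _ = AddSubgroup.zmultiples w ⊔ (dualPairing u).ker := by
        rw [AddSubgroup.inf_addSubgroupOf_left, hline, hperp]
    _ = (AddSubgroup.zmultiples (dualPairing u w)).comap (dualPairing u) := by
        rw [← AddSubgroup.comap_map_eq, AddMonoidHom.map_zmultiples]

lemma index_brsSublattice_mul_eq_inner {u w : EucPlane} (hu : IsPrimitiveIn (dualLattice Γ) u)
    (hw : w ∈ Γ) {g : ℝ} (hg : 0 < g) (hwu : w = g • u) :
    (((brsSublattice Γ w).addSubgroupOf Γ).index : ℝ) * g = ⟪w, w⟫ := by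
  set φ := dualPairing ⟨u, hu.1⟩
  have hindex : ((brsSublattice Γ w).addSubgroupOf Γ).index = (φ ⟨w, hw⟩).natAbs := by
    rw [brsSublattice_addSubgroupOf_eq_comap ⟨u, hu.1⟩ hg.ne' ⟨w, hw⟩ hwu,
      AddSubgroup.index_comap_of_surjective _ hu.dualPairing_surjective, Int.index_zmultiples]
  have hinner : (φ ⟨w, hw⟩ : ℝ) * g = ⟪w, w⟫ := by
    rw [dualPairing_apply, mul_comm, ← real_inner_smul_left, ← hwu]
  calc (((brsSublattice Γ w).addSubgroupOf Γ).index : ℝ) * g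
      = |(φ ⟨w, hw⟩ : ℝ) * g| := by
        rw [hindex, Nat.cast_natAbs, Int.cast_abs, abs_mul, abs_of_pos hg]
    _ = ⟪w, w⟫ := by rw [hinner, abs_of_nonneg real_inner_self_nonneg]

end

theorem index_of_brsSublattice_general
    (Γ : AddSubgroup EucPlane) (v₁ v₂ : EucPlane) (hΓ : Γ = AddSubgroup.closure {v₁, v₂})
    (a b c : ℤ)
    (ha : ⟪v₁, v₁⟫ = (a : ℝ)) (hb : ⟪v₁, v₂⟫ = (b : ℝ)) (hc : ⟪v₂, v₂⟫ = (c : ℝ))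
    (w : EucPlane) (hw : IsPrimitiveIn Γ w)
    (g : ℝ) (hg : 0 < g) (u₀ : EucPlane)
    (hu₀ : IsPrimitiveIn (dualLattice Γ) u₀) (hwu : w = g • u₀) :
    (∃ gz : ℤ, (gz : ℝ) = g ∧ gz ∣ (a * c - b ^ 2)) ∧
    (((brsSublattice Γ w).addSubgroupOf Γ).index : ℝ) * g = ⟪w, w⟫ := by
  refine ⟨?_, index_brsSublattice_mul_eq_inner hu₀ hw.1 hg hwu⟩
  subst hΓ
  have hintegral : w ∈ dualLattice (AddSubgroup.closure {v₁, v₂}) := by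
    refine closure_le_dualLattice_closure ?_ hw.1
    rintro u (rfl | rfl) v (rfl | rfl)
    exacts [⟨a, ha⟩, ⟨b, hb⟩, ⟨b, by rw [real_inner_comm, hb]⟩, ⟨c, hc⟩]
  obtain ⟨n, hn⟩ := hu₀.exists_intCast_eq_of_smul_mem (hwu ▸ hintegral)
  have hspan : u₀ ∈ Submodule.span ℝ {v₁, v₂} := by
    rw [← inv_smul_smul₀ hg.ne' u₀, ← hwu]
    have hle : AddSubgroup.closure {v₁, v₂} ≤ (Submodule.span ℝ {v₁, v₂}).toAddSubgroup :=
      (AddSubgroup.closure_le _).2 Submodule.subset_span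
    exact Submodule.smul_mem _ _ (hle hw.1)
  have hd : (a * c - b ^ 2) • u₀ ∈ AddSubgroup.closure {v₁, v₂} :=
    gram_det_zsmul_mem_closure_pair ha hb hc hu₀.1 hspan
  refine ⟨n, hn, hw.dvd_of_zsmul_eq_zsmul hd ?_⟩
  rw [hwu, ← hn, Int.cast_smul_eq_zsmul, smul_comm]

theorem index_of_brsSublattice
    (Γ : AddSubgroup EucPlane) (v₁ v₂ : EucPlane)
    (hbasis : LinearIndependent ℝ ![v₁, v₂]) (hΓ : Γ = AddSubgroup.closure {v₁, v₂})
    (a b c : ℤ)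
    (ha : ⟪v₁, v₁⟫ = (a : ℝ)) (hb : ⟪v₁, v₂⟫ = (b : ℝ)) (hc : ⟪v₂, v₂⟫ = (c : ℝ))
    (hprim : Int.gcd (Int.gcd a b) c = 1)
    (w : EucPlane) (hw : IsPrimitiveIn Γ w)
    (g : ℚ) (hg : 0 < g) (u₀ : EucPlane)
    (hu₀ : IsPrimitiveIn (dualLattice Γ) u₀) (hwu : w = (g : ℝ) • u₀) :
    (∃ gz : ℤ, (gz : ℚ) = g ∧ gz ∣ (a * c - b ^ 2)) ∧
    (((brsSublattice Γ w).addSubgroupOf Γ).index : ℝ) * (g : ℝ) = ⟪w, w⟫ := by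
  obtain ⟨⟨n, hn, hdvd⟩, hindex⟩ :=
    index_of_brsSublattice_general Γ v₁ v₂ hΓ a b c ha hb hc w hw g (mod_cast hg) u₀ hu₀ hwu
  exact ⟨⟨n, mod_cast hn, hdvd⟩, hindex⟩
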